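/- Let L_1,…,L_7 ⊆ ℂ^4 be 2-dimensional linear subspaces (lines in P^3) which are pairwise disjoint. Then there exists a nonzero homogeneous polynomial F of degree 12 in ℂ[x_0,x_1,x_2,x_3] with F ∈ I(L_i)^3 for i = 1,…,6 and F ∈ I(L_7)^2; that is, for every configuration of seven pairwise skew lines there is a surface of degree 12 vanishing to order 3 along the first six lines and singular along the seventh. -/

import Mathlib

open MvPolynomial

noncomputable section

abbrev C4 : Type := Fin 4 → ℂ
abbrev R3 : Type := MvPolynomial (Fin 4) ℂ

/-- The homogeneous ideal of the line in `P^3` corresponding to a linear subspace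
`L ⊆ ℂ^4`: all polynomials vanishing identically on `L`. -/
def lineIdeal (L : Submodule ℂ C4) : Ideal R3 where
  carrier := {F | ∀ v ∈ L, eval v F = 0}
  add_mem' := by
    intro a b ha hb v hv
    simp [ha v hv, hb v hv]
  zero_mem' := by
    intro v hv
    simp
  smul_mem' := by
    intro c F hF v hv
    simp [smul_eq_mul, hF v hv]

/-!
Suppose that restriction to the lines is an isomorphism in degree `2m`. Then there are forms
`q_0, …, q_{2m}` of degree `2m` that vanish on all lines but one, on which `q_j` restricts to
`δ s^(2m-j) r^j` with a fixed `δ ≠ 0`. The Hankel determinant `det (q_{i+j})` of size `m + 1` has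
degree `(m + 1) (2m)`. It vanishes to order `m + 1` along the other lines, where all its entries
vanish, and to order `m` along the special line, where its matrix has rank one. For `m = 2` and
seven lines in `P^3` this is a form of degree 12 with multiplicities 3 and 2.

By Cramer's rule this determinant makes sense for every configuration of lines, and it is nonzero
for an explicit one. An arbitrary configuration is joined to that one by a straight path; dividing
the resulting family of forms by the largest possible power of the time parameter produces a nonzero
limit, which inherits the multiplicities.
-/

section Contraction

variable {σ A B : Type*} [CommRing A] [CommRing B]

/-- The substitution `x ↦ p + ε (x - p)`, where `ε` is the variable of the outer polynomial ring:
it joins `x ↦ p` at `ε = 0` to the identity at `ε = 1`. If `p` is a linear projection onto a linear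
subspace, the order of vanishing of `contraction p F` in `ε` bounds from below the multiplicity
of `F` along that subspace. -/
def contraction (p : σ → MvPolynomial σ A) :
    MvPolynomial σ A →ₐ[A] Polynomial (MvPolynomial σ A) :=
  aeval fun a => .C (p a) + .X * .C (X a - p a)

theorem contraction_X (p : σ → MvPolynomial σ A) (a : σ) :
    contraction p (X a) = .C (p a) + .X * .C (X a - p a) :=
  aeval_X _ a

theorem eval_one_contraction (p : σ → MvPolynomial σ A) (F : MvPolynomial σ A) :
    (contraction p F).eval 1 = F := by
  induction F using MvPolynomial.induction_on with
  | C c => simp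
  | add F G hF hG => simp [hF, hG]
  | mul_X F a hF => simp [hF, contraction_X]

theorem X_dvd_contraction_sub_C_aeval (p : σ → MvPolynomial σ A) (F : MvPolynomial σ A) :
    Polynomial.X ∣ contraction p F - Polynomial.C (aeval p F) := by
  rw [Polynomial.X_dvd_iff, Polynomial.coeff_sub, Polynomial.coeff_C_zero, sub_eq_zero]
  induction F using MvPolynomial.induction_on with
  | C c => simp
  | add F G hF hG => simp only [map_add, Polynomial.coeff_add, hF, hG]
  | mul_X F a hF => simp [contraction_X, map_mul, Polynomial.mul_coeff_zero, hF]

theorem contraction_map (f : A →+* B) (p : σ → MvPolynomial σ A) (F : MvPolynomial σ A) :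
    contraction (fun a => map f (p a)) (map f F) = (contraction p F).map (map f) := by
  induction F using MvPolynomial.induction_on with
  | C c => simp
  | add F G hF hG => simp [hF, hG]
  | mul_X F a hF => simp [hF, contraction_X]

theorem contraction_mem_reesAlgebra {I : Ideal (MvPolynomial σ A)} {p : σ → MvPolynomial σ A}
    (hp : ∀ a, X a - p a ∈ I) (F : MvPolynomial σ A) : contraction p F ∈ reesAlgebra I := by
  have C_mem (G : MvPolynomial σ A) : Polynomial.C G ∈ reesAlgebra I :=
    (reesAlgebra I).algebraMap_mem G
  induction F using MvPolynomial.induction_on with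
  | C c => simpa [Polynomial.algebraMap_apply] using C_mem (C c)
  | add F G hF hG => simpa using add_mem hF hG
  | mul_X F a hF =>
    have hX : Polynomial.X * Polynomial.C (X a - p a) ∈ reesAlgebra I := by
      rw [mul_comm, Polynomial.C_mul_X_eq_monomial]
      exact reesAlgebra.monomial_mem.mpr (by simpa using hp a)
    simpa only [map_mul, contraction_X] using mul_mem hF (add_mem (C_mem _) hX)

theorem mem_pow_of_X_pow_dvd_contraction {I : Ideal (MvPolynomial σ A)}
    {p : σ → MvPolynomial σ A} (hp : ∀ a, X a - p a ∈ I) {m : ℕ} {F : MvPolynomial σ A}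
    (hF : Polynomial.X ^ m ∣ contraction p F) : F ∈ I ^ m := by
  rw [← eval_one_contraction p F, Polynomial.eval_eq_sum_range]
  refine Ideal.sum_mem _ fun k _ => ?_
  rw [one_pow, mul_one]
  obtain hk | hk := lt_or_ge k m
  · exact Polynomial.X_pow_dvd_iff.mp hF k hk ▸ zero_mem _
  · exact Ideal.pow_le_pow_right hk
      ((mem_reesAlgebra_iff I _).mp (contraction_mem_reesAlgebra hp F) k)

end Contraction

section Determinant

variable {n R : Type*} [Fintype n] [DecidableEq n] [CommRing R]

theorem pow_card_dvd_det {e : R} {M : Matrix n n R} (h : ∀ i j, e ∣ M i j) :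
    e ^ Fintype.card n ∣ M.det := by
  choose N hN using h
  have hM : M = e • Matrix.of N := Matrix.ext hN
  exact hM ▸ Matrix.det_smul (Matrix.of N) e ▸ dvd_mul_right _ _

/-- A matrix of rank one modulo `e` is `e N + a bᵀ`; its determinant is that of the bordered matrix
`[1, -bᵀ; a, e N]`, where `e` can be moved from the columns of `N` to the first row. -/
theorem pow_card_dvd_mul_det {e : R} {M : Matrix n n R} {a b : n → R}
    (h : ∀ i j, e ∣ M i j - a i * b j) : e ^ Fintype.card n ∣ e * M.det := by
  choose N hN using h
  let row : Matrix Unit n R := .of fun _ j => b j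
  let col : Matrix n Unit R := .of fun i _ => a i
  have hM : M = e • Matrix.of N + col * row := by
    ext i j
    simp [row, col, Matrix.mul_apply, ← hN]
  have hborder : (Matrix.fromBlocks (1 : Matrix Unit Unit R) (-row) col (e • Matrix.of N)).det
      = M.det := by
    rw [Matrix.det_fromBlocks_one₁₁, Matrix.mul_neg, sub_neg_eq_add, hM]
  have hmove : Matrix.fromBlocks (e • (1 : Matrix Unit Unit R)) 0 0 (1 : Matrix n n R)
        * .fromBlocks 1 (-row) col (e • .of N)
      = .fromBlocks (e • 1) (-row) col (.of N) * .fromBlocks 1 0 0 (e • 1) := by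
    simp [Matrix.fromBlocks_multiply]
  have hdet := congrArg Matrix.det hmove
  simp only [Matrix.det_mul, hborder, Matrix.det_fromBlocks_zero₂₁, Matrix.det_smul,
    Matrix.det_one, mul_one, one_mul, Fintype.card_unit, pow_one] at hdet
  exact hdet ▸ dvd_mul_left _ _

theorem isHomogeneous_det {σ : Type*} {d : ℕ} {M : Matrix n n (MvPolynomial σ R)}
    (h : ∀ i j, (M i j).IsHomogeneous d) : M.det.IsHomogeneous (Fintype.card n * d) := by
  rw [Matrix.det_apply']
  refine .sum _ _ _ fun τ _ => ?_
  rw [← map_intCast (C : R →+* MvPolynomial σ R)]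
  refine .C_mul ?_ _
  simpa using IsHomogeneous.prod Finset.univ _ (fun _ => d) fun i _ => h (τ i) i

end Determinant

section Hankel

variable {m : ℕ} {R S : Type*}

/-- The `(m + 1) × (m + 1)` Hankel matrix with entries `q (i + j)`. -/
def hankel (q : Fin (2 * m + 1) → R) : Matrix (Fin (m + 1)) (Fin (m + 1)) R :=
  .of fun i j => q ⟨i + j, by omega⟩

variable [CommRing R] [CommRing S]

theorem map_det_hankel (f : R →+* S) (q : Fin (2 * m + 1) → R) :
    f (hankel q).det = (hankel (f ∘ q)).det :=
  f.map_det _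

theorem det_hankel_mul (c : R) (q : Fin (2 * m + 1) → R) :
    (hankel fun j => c * q j).det = c ^ (m + 1) * (hankel q).det := by
  have : (hankel fun j => c * q j) = c • hankel q := rfl
  rw [this, Matrix.det_smul, Fintype.card_fin]

theorem pow_dvd_det_hankel {e : R} {q : Fin (2 * m + 1) → R} (h : ∀ j, e ∣ q j) :
    e ^ (m + 1) ∣ (hankel q).det := by
  simpa using pow_card_dvd_det (M := hankel q) fun i j => h ⟨i + j, by omega⟩

theorem pow_dvd_det_hankel_of_dvd_sub {e : R} (he : IsLeftRegular e) {q : Fin (2 * m + 1) → R}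
    {c s r : R} (h : ∀ j, e ∣ q j - c * (s ^ (2 * m - j) * r ^ (j : ℕ))) :
    e ^ m ∣ (hankel q).det := by
  have hrank : ∀ i j : Fin (m + 1), e ∣ hankel q i j
      - (c * (s ^ (m - i) * r ^ (i : ℕ))) * (s ^ (m - j) * r ^ (j : ℕ)) := fun i j => by
    have hs : s ^ (2 * m - (i + j)) = s ^ (m - i) * s ^ (m - j) := by
      rw [← pow_add]
      congr 1
      omega
    have hsplit : c * (s ^ (2 * m - (i + j)) * r ^ (i + j : ℕ))
        = (c * (s ^ (m - i) * r ^ (i : ℕ))) * (s ^ (m - j) * r ^ (j : ℕ)) := by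
      rw [hs, pow_add]
      ring
    exact hsplit ▸ h ⟨i + j, by omega⟩
  obtain ⟨t, ht⟩ := pow_card_dvd_mul_det hrank
  rw [Fintype.card_fin, pow_succ', mul_assoc] at ht
  exact ⟨t, he ht⟩

end Hankel

section Interpolation

variable {σ ι κ R S : Type*} {d : ℕ} [CommSemiring R] [CommSemiring S]

/-- The coefficient of `s ^ (d - j) * r ^ j` in the product of the linear forms `x n * s + y n * r`
in two variables `s` and `r`. -/
def binaryCoeff (x y : Fin d → R) (j : ℕ) : R :=
  ∑ t ∈ Finset.univ.powersetCard j, (∏ n ∈ t, y n) * ∏ n ∈ tᶜ, x n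

theorem prod_add_eq_sum_binaryCoeff (x y : Fin d → R) (s r : R) :
    ∏ n, (s * x n + r * y n)
      = ∑ j : Fin (d + 1), binaryCoeff x y j * (s ^ (d - j) * r ^ (j : ℕ)) := by
  simp_rw [add_comm (s * _), Finset.prod_add, Finset.sum_powerset, Finset.card_univ,
    Fintype.card_fin, Finset.sum_range, binaryCoeff, Finset.sum_mul]
  refine Finset.sum_congr rfl fun j _ => Finset.sum_congr rfl fun t ht => ?_
  have ht : t.card = j := (Finset.mem_powersetCard.mp ht).2
  simp only [← Finset.compl_eq_univ_sdiff, Finset.prod_mul_distrib, Finset.prod_const,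
    Finset.card_compl, Fintype.card_fin, ht]
  ring

theorem map_binaryCoeff (f : R →+* S) (x y : Fin d → R) (j : ℕ) :
    f (binaryCoeff x y j) = binaryCoeff (f ∘ x) (f ∘ y) j := by
  simp [binaryCoeff]

/-- The point `s u + r v` of the line spanned by `u` and `v`, given by its coordinates. When the
parameters `s` and `r` are linear forms, it is a linear map to that line. -/
def linePoint (s r : MvPolynomial σ R) (u v : σ → R) (a : σ) : MvPolynomial σ R :=
  s * C (u a) + r * C (v a)

theorem map_linePoint (f : R →+* S) (s r : MvPolynomial σ R) (u v : σ → R) (a : σ) :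
    map f (linePoint s r u v a) = linePoint (map f s) (map f r) (f ∘ u) (f ∘ v) a := by
  simp [linePoint]

/-- The matrix of the restriction of degree `d` forms to the lines spanned by `u i` and `v i`: its
columns are indexed by the monomials `∏ n, X (w k n)`, and its row `(i, j)` reads off the
coefficient of `s ^ (d - j) * r ^ j` on the `i`-th line. -/
def restrictionMatrix (w : κ → Fin d → σ) (u v : ι → σ → R) :
    Matrix (ι × Fin (d + 1)) κ R :=
  .of fun i k => binaryCoeff (u i.1 ∘ w k) (v i.1 ∘ w k) i.2

theorem map_restrictionMatrix (f : R →+* S) (w : κ → Fin d → σ) (u v : ι → σ → R) :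
    (restrictionMatrix w u v).map f = restrictionMatrix w (fun i => f ∘ u i) fun i => f ∘ v i := by
  ext i k
  exact map_binaryCoeff f (u i.1 ∘ w k) (v i.1 ∘ w k) i.2

variable [Fintype κ]

/-- The form with coefficients `c` on the monomials `∏ n, X (w k n)`. -/
def formOfCoeffs (w : κ → Fin d → σ) (c : κ → R) : MvPolynomial σ R :=
  ∑ k, C (c k) * ∏ n, X (w k n)

theorem isHomogeneous_formOfCoeffs (w : κ → Fin d → σ) (c : κ → R) :
    (formOfCoeffs w c).IsHomogeneous d := by
  refine .sum _ _ _ fun k _ => .C_mul ?_ _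
  simpa using IsHomogeneous.prod Finset.univ _ (fun _ => 1) fun n _ => isHomogeneous_X R (w k n)

theorem map_formOfCoeffs (f : R →+* S) (w : κ → Fin d → σ) (c : κ → R) :
    map f (formOfCoeffs w c) = formOfCoeffs w (f ∘ c) := by
  simp [formOfCoeffs]

theorem aeval_linePoint_formOfCoeffs (w : κ → Fin d → σ) (c : κ → R) (u v : ι → σ → R) (i : ι)
    (s r : MvPolynomial σ R) :
    aeval (linePoint s r (u i) (v i)) (formOfCoeffs w c)
      = ∑ j : Fin (d + 1), C ((restrictionMatrix w u v).mulVec c (i, j))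
          * (s ^ (d - j) * r ^ (j : ℕ)) := by
  have hmonomial (k : κ) : ∏ n, linePoint s r (u i) (v i) (w k n)
      = ∑ j : Fin (d + 1), C (restrictionMatrix w u v (i, j) k) * (s ^ (d - j) * r ^ (j : ℕ)) := by
    simp only [restrictionMatrix, Matrix.of_apply, map_binaryCoeff]
    exact prod_add_eq_sum_binaryCoeff _ _ s r
  simp only [formOfCoeffs, map_sum, map_mul, map_prod, aeval_X, hmonomial, Matrix.mulVec,
    dotProduct, Finset.sum_mul, Finset.mul_sum]
  rw [Finset.sum_comm]
  refine Finset.sum_congr rfl fun j _ => Finset.sum_congr rfl fun k _ => ?_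
  rw [aeval_C, algebraMap_eq]
  ring

end Interpolation

section HankelForm

variable {σ ι R S : Type*} [Fintype ι] [DecidableEq ι] [CommRing R] [CommRing S]

section DualForm

variable {d : ℕ}

/-- The combination of the monomials `∏ n, X (w k n)` that vanishes on all lines but the `i`-th one
and restricts to `δ * s ^ (d - j) * r ^ j` there, where `k = (i, j)` and `δ` is the determinant of
the restriction matrix. Cramer's rule makes it compatible with ring homomorphisms. -/
def dualForm (w : ι × Fin (d + 1) → Fin d → σ) (u v : ι → σ → R) (k : ι × Fin (d + 1)) :
    MvPolynomial σ R :=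
  formOfCoeffs w ((restrictionMatrix w u v).cramer (Pi.single k 1))

variable (w : ι × Fin (d + 1) → Fin d → σ)

theorem map_dualForm (f : R →+* S) (u v : ι → σ → R) (k : ι × Fin (d + 1)) :
    map f (dualForm w u v k) = dualForm w (fun i => f ∘ u i) (fun i => f ∘ v i) k := by
  rw [dualForm, map_formOfCoeffs, dualForm, ← map_restrictionMatrix]
  congr 1
  ext l
  simpa [Matrix.cramer_eq_adjugate_mulVec] using
    congrFun₂ (f.map_adjugate (restrictionMatrix w u v)) l k

theorem aeval_linePoint_dualForm (u v : ι → σ → R) (s r : MvPolynomial σ R) (i i₀ : ι)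
    (j : Fin (d + 1)) :
    aeval (linePoint s r (u i) (v i)) (dualForm w u v (i₀, j))
      = if i = i₀ then C (restrictionMatrix w u v).det * (s ^ (d - j) * r ^ (j : ℕ)) else 0 := by
  rw [dualForm, aeval_linePoint_formOfCoeffs, Matrix.mulVec_cramer]
  rcases eq_or_ne i i₀ with rfl | hi
  · simp [Pi.single_apply, apply_ite C, ite_mul]
  · simp [hi]

theorem dualForm_eq_of_mul_eq_one {u v : ι → σ → R}
    {N : Matrix (ι × Fin (d + 1)) (ι × Fin (d + 1)) R} (hN : N * restrictionMatrix w u v = 1)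
    (k : ι × Fin (d + 1)) :
    dualForm w u v k = C (restrictionMatrix w u v).det * formOfCoeffs w (N.col k) := by
  have hcramer : (restrictionMatrix w u v).cramer (Pi.single k 1)
      = (restrictionMatrix w u v).det • N.col k := by
    rw [← Matrix.mulVec_single_one, ← Matrix.mulVec_smul, ← Matrix.mulVec_cramer,
      Matrix.mulVec_mulVec, hN, Matrix.one_mulVec]
  simp [dualForm, formOfCoeffs, hcramer, Finset.mul_sum, mul_assoc]

end DualForm

variable {m : ℕ} (w : ι × Fin (2 * m + 1) → Fin (2 * m) → σ)

/-- The Hankel determinant of the dual forms of degree `2 * m` of the `i₀`-th line, the form of high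
multiplicity along all lines. -/
def hankelForm (u v : ι → σ → R) (i₀ : ι) : MvPolynomial σ R :=
  (hankel fun j => dualForm w u v (i₀, j)).det

theorem hankelForm_ne_zero_of_mul_eq_one [IsDomain R] {u v : ι → σ → R}
    {N : Matrix (ι × Fin (2 * m + 1)) (ι × Fin (2 * m + 1)) R}
    (hN : N * restrictionMatrix w u v = 1) {i₀ : ι} {x : σ → R}
    (hx : (hankel fun j => ∑ k, N k (i₀, j) * ∏ n, x (w k n)).det ≠ 0) :
    hankelForm w u v i₀ ≠ 0 := by
  have hdet : (restrictionMatrix w u v).det ≠ 0 :=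
    (Matrix.isUnit_det_of_left_inverse hN).ne_zero
  have heval : eval x (hankelForm w u v i₀) = (restrictionMatrix w u v).det ^ (m + 1)
      * (hankel fun j => ∑ k, N k (i₀, j) * ∏ n, x (w k n)).det := by
    simp only [hankelForm, map_det_hankel, Function.comp_def, dualForm_eq_of_mul_eq_one w hN,
      formOfCoeffs, map_mul, map_sum, map_prod, map_pow, eval_C, eval_X, Matrix.col_apply,
      det_hankel_mul]
  exact fun h₀ => mul_ne_zero (pow_ne_zero _ hdet) hx (by rw [← heval, h₀, map_zero])

theorem map_hankelForm (f : R →+* S) (u v : ι → σ → R) (i₀ : ι) :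
    map f (hankelForm w u v i₀) = hankelForm w (fun i => f ∘ u i) (fun i => f ∘ v i) i₀ := by
  simp only [hankelForm, map_det_hankel, Function.comp_def, map_dualForm]

theorem isHomogeneous_hankelForm (u v : ι → σ → R) (i₀ : ι) :
    (hankelForm w u v i₀).IsHomogeneous ((m + 1) * (2 * m)) := by
  rw [hankelForm]
  simpa using isHomogeneous_det (M := hankel fun j => dualForm w u v (i₀, j))
    fun _ _ => isHomogeneous_formOfCoeffs w _

theorem X_pow_succ_dvd_contraction_hankelForm (u v : ι → σ → R) (s r : MvPolynomial σ R)
    {i i₀ : ι} (hi : i ≠ i₀) :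
    Polynomial.X ^ (m + 1) ∣ contraction (linePoint s r (u i) (v i)) (hankelForm w u v i₀) := by
  rw [hankelForm, ← AlgHom.coe_toRingHom, map_det_hankel]
  refine pow_dvd_det_hankel fun j => ?_
  simpa only [Function.comp_apply, AlgHom.coe_toRingHom, aeval_linePoint_dualForm, if_neg hi,
    map_zero, sub_zero] using
    X_dvd_contraction_sub_C_aeval (linePoint s r (u i) (v i)) (dualForm w u v (i₀, j))

theorem X_pow_dvd_contraction_hankelForm (u v : ι → σ → R) (s r : MvPolynomial σ R) (i₀ : ι) :
    Polynomial.X ^ m ∣ contraction (linePoint s r (u i₀) (v i₀)) (hankelForm w u v i₀) := by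
  rw [hankelForm, ← AlgHom.coe_toRingHom, map_det_hankel]
  refine pow_dvd_det_hankel_of_dvd_sub Polynomial.isRegular_X.left
    (c := .C (C (restrictionMatrix w u v).det)) (s := .C s) (r := .C r) fun j => ?_
  simpa only [Function.comp_apply, AlgHom.coe_toRingHom, aeval_linePoint_dualForm, if_pos, map_mul,
    map_pow] using
    X_dvd_contraction_sub_C_aeval (linePoint s r (u i₀) (v i₀)) (dualForm w u v (i₀, j))

end HankelForm

section Degeneration

variable {σ K : Type*} [Field K]

theorem exists_eq_C_X_pow_mul {F : MvPolynomial σ (Polynomial K)} (hF : F ≠ 0) :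
    ∃ (k : ℕ) (G : MvPolynomial σ (Polynomial K)),
      F = C (Polynomial.X ^ k) * G ∧ map (Polynomial.evalRingHom 0) G ≠ 0 := by
  have hunit : ¬IsUnit (C Polynomial.X : MvPolynomial σ (Polynomial K)) :=
    ((prime_C_iff σ).mpr Polynomial.prime_X).not_isUnit
  obtain ⟨G, hFG, hG⟩ :=
    (FiniteMultiplicity.of_not_isUnit hunit hF).exists_eq_pow_mul_and_not_dvd
  refine ⟨_, G, by rw [map_pow]; exact hFG, fun hG₀ => hG ?_⟩
  rw [C_dvd_iff_dvd_coeff]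
  intro e
  rw [Polynomial.X_dvd_iff, Polynomial.coeff_zero_eq_eval_zero]
  simpa [coeff_map] using congrArg (coeff e) hG₀

theorem map_evalRingHom_map_C {R : Type*} [CommRing R] (c : R) (F : MvPolynomial σ R) :
    map (Polynomial.evalRingHom c) (map Polynomial.C F) = F := by
  rw [map_map]
  convert map_id F
  ext
  simp

theorem isHomogeneous_of_C_mul {A : Type*} [CommSemiring A] [NoZeroDivisors A] {c : A}
    (hc : c ≠ 0) {F : MvPolynomial σ A} {d : ℕ} (h : (C c * F).IsHomogeneous d) :
    F.IsHomogeneous d :=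
  fun e he => h (by rw [coeff_C_mul]; exact mul_ne_zero hc he)

theorem X_pow_dvd_contraction_of_C_mul {A : Type*} [CommRing A] [IsDomain A] {c : A} (hc : c ≠ 0)
    {p : σ → MvPolynomial σ A} {F : MvPolynomial σ A} {m : ℕ}
    (h : Polynomial.X ^ m ∣ contraction p (C c * F)) :
    Polynomial.X ^ m ∣ contraction p F := by
  have hX : ¬Polynomial.X ∣ contraction p (C c) := by
    simpa [Polynomial.algebraMap_apply, Polynomial.X_dvd_iff] using hc
  exact Polynomial.prime_X.pow_dvd_of_dvd_mul_left m hX (by simpa only [map_mul] using h)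

theorem X_pow_dvd_contraction_map {A B : Type*} [CommRing A] [CommRing B] (f : A →+* B)
    {p : σ → MvPolynomial σ A} {F : MvPolynomial σ A} {m : ℕ}
    (h : Polynomial.X ^ m ∣ contraction p F) :
    Polynomial.X ^ m ∣ contraction (fun a => map f (p a)) (map f F) := by
  simpa [contraction_map] using map_dvd (Polynomial.mapRingHom (map f)) h

variable {ι : Type*} [Fintype ι] [DecidableEq ι] {m : ℕ}

/-- Along the straight path from the given lines to a configuration with a nonzero Hankel form, the
Hankel form is not identically zero; dividing it by a power of the time parameter makes its limit
nonzero. -/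
theorem exists_isHomogeneous_of_hankelForm_ne_zero
    {w : ι × Fin (2 * m + 1) → Fin (2 * m) → σ} {u₁ v₁ : ι → σ → K} {i₀ : ι}
    (h₁ : hankelForm w u₁ v₁ i₀ ≠ 0) (u v : ι → σ → K) (s r : ι → MvPolynomial σ K) :
    ∃ F : MvPolynomial σ K, F ≠ 0 ∧ F.IsHomogeneous ((m + 1) * (2 * m)) ∧
      (∀ i, i ≠ i₀ → Polynomial.X ^ (m + 1) ∣ contraction (linePoint (s i) (r i) (u i) (v i)) F) ∧
      Polynomial.X ^ m ∣ contraction (linePoint (s i₀) (r i₀) (u i₀) (v i₀)) F := by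
  let path (x x₁ : ι → σ → K) (i : ι) (a : σ) : Polynomial K :=
    .C (x i a) + .X * .C (x₁ i a - x i a)
  let ev : K → Polynomial K →+* K := Polynomial.evalRingHom
  have path_zero (x x₁ : ι → σ → K) (i : ι) : ev 0 ∘ path x x₁ i = x i := by
    ext a
    simp [path, ev]
  have path_one (x x₁ : ι → σ → K) (i : ι) : ev 1 ∘ path x x₁ i = x₁ i := by
    ext a
    simp [path, ev]
  have hne : hankelForm w (path u u₁) (path v v₁) i₀ ≠ 0 := fun h₀ => h₁ <| by
    simpa only [map_hankelForm, path_one, map_zero] using congrArg (map (ev 1)) h₀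
  obtain ⟨k, G, hG, hG₀⟩ := exists_eq_C_X_pow_mul hne
  have hXk : (Polynomial.X ^ k : Polynomial K) ≠ 0 := pow_ne_zero _ Polynomial.X_ne_zero
  have dvd_limit {i : ι} {n : ℕ} (hn : Polynomial.X ^ n ∣ contraction
      (linePoint (map Polynomial.C (s i)) (map Polynomial.C (r i)) (path u u₁ i) (path v v₁ i))
      (hankelForm w (path u u₁) (path v v₁) i₀)) :
      Polynomial.X ^ n ∣ contraction (linePoint (s i) (r i) (u i) (v i)) (map (ev 0) G) := by
    rw [hG] at hn
    simpa only [map_linePoint, map_evalRingHom_map_C, ev, path_zero] using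
      X_pow_dvd_contraction_map (ev 0) (X_pow_dvd_contraction_of_C_mul hXk hn)
  have hhom := isHomogeneous_hankelForm w (path u u₁) (path v v₁) i₀
  rw [hG] at hhom
  exact ⟨map (ev 0) G, hG₀, (isHomogeneous_of_C_mul hXk hhom).map _,
    fun i hi => dvd_limit (X_pow_succ_dvd_contraction_hankelForm w _ _ _ _ hi),
    dvd_limit (X_pow_dvd_contraction_hankelForm w _ _ _ _ i₀)⟩

end Degeneration

/-- First spanning vectors of seven lines whose restriction matrix in degree 4 is invertible
modulo 5. -/
def witnessFst : Fin 7 → Fin 4 → ℤ :=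
  ![![1, 0, 0, 0], ![0, 0, 1, 0], ![1, 0, 1, 0], ![1, 0, 2, 1], ![1, 0, 2, 0], ![1, 0, 3, 0],
    ![1, 0, 1, 2]]

/-- Second spanning vectors of the lines of `witnessFst`. -/
def witnessSnd : Fin 7 → Fin 4 → ℤ :=
  ![![0, 1, 0, 0], ![0, 0, 0, 1], ![0, 1, 0, 1], ![0, 1, 1, 4], ![0, 1, 0, 4], ![0, 1, 2, 2],
    ![0, 1, 3, 4]]

/-- The 35 monomials of degree 4 in 4 variables, each written as the decimal number whose digits are
the indices of its factors. -/
def quarticMonomial (k : Fin 7 × Fin (2 * 2 + 1)) (n : Fin (2 * 2)) : Fin 4 :=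
  let codes : Fin 35 → ℕ :=
    ![0000, 0001, 0002, 0003, 0011, 0012, 0013, 0022, 0023, 0033, 0111, 0112,
      0113, 0122, 0123, 0133, 0222, 0223, 0233, 0333, 1111, 1112, 1113, 1122,
      1123, 1133, 1222, 1223, 1233, 1333, 2222, 2223, 2233, 2333, 3333]
  Fin.ofNat 4 (codes (finProdFinEquiv k) / 10 ^ (3 - (n : ℕ)) % 10)

/-- The inverse modulo 5 of the restriction matrix of the lines of `witnessFst` and `witnessSnd`:
the decimal digits of each number are the entries of a row. -/
def witnessInverse :
    Matrix (Fin 7 × Fin (2 * 2 + 1)) (Fin 7 × Fin (2 * 2 + 1)) (ZMod 5) :=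
  let rows : Fin 35 → ℕ :=
    ![10000000000000000000000000000000000,
      01000000000000000000000000000000000,
      40000400003000000000100002000000000,
      03100240403023324330423400303413123,
      00100000000000000000000000000000000,
      30211001044443000222341331344144223,
      01243234333420410201113012313131030,
      10000100000000000000200002000000000,
      02433313224333412001002140221001423,
      34420412024320113322133142230240001,
      00010000000000000000000000000000000,
      44230130324201330211224101444113300,
      11221023342221222422213224032244111,
      43143002110323113001204121230224021,
      20134432044224012430321303234422432,
      30041111041302021440432412241031003,
      40000400003000000000200001000000000,
      32041143012104241332413120122024213,
      44104031013340143024231441304414403,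
      23012434021120324240401121104101002,
      00001000000000000000000000000000000,
      30411334433140000103440420102104133,
      31200003014411230214121000001443420,
      13333030102302311324410312040302001,
      22140312320223044221214432034401332,
      00004000040000300000000030000000000,
      04232401322044020224232043440314112,
      14101440330313341103233304100043443,
      44320401403100004234410001102234034,
      24300002041144120341434020004112130,
      00000100000000000000000000000000000,
      00000010000000000000000000000000000,
      00000001000000000000000000000000000,
      00000000100000000000000000000000000,
      00000000010000000000000000000000000]
  .of fun k i =>
    (rows (finProdFinEquiv k) / 10 ^ (34 - (finProdFinEquiv i : ℕ)) % 10 : ℕ)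

set_option maxRecDepth 100000 in
theorem witnessInverse_mul_restrictionMatrix :
    witnessInverse * restrictionMatrix quarticMonomial
      (fun i => Int.castRingHom (ZMod 5) ∘ witnessFst i)
      (fun i => Int.castRingHom (ZMod 5) ∘ witnessSnd i) = 1 := by
  decide +kernel

theorem det_hankel_witness_ne_zero :
    (hankel fun j : Fin (2 * 2 + 1) => ∑ k, witnessInverse k (6, j) *
      ∏ n, (![0, 1, 1, 0] : Fin 4 → ZMod 5) (quarticMonomial k n)).det ≠ 0 := by
  decide +kernel

theorem hankelForm_witness_ne_zero (K : Type*) [CommRing K] [CharZero K] :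
    hankelForm quarticMonomial (fun i => Int.castRingHom K ∘ witnessFst i)
      (fun i => Int.castRingHom K ∘ witnessSnd i) 6 ≠ 0 := by
  have hmod : hankelForm quarticMonomial (fun i => Int.castRingHom (ZMod 5) ∘ witnessFst i)
      (fun i => Int.castRingHom (ZMod 5) ∘ witnessSnd i) 6 ≠ 0 :=
    have : Fact (Nat.Prime 5) := ⟨Nat.prime_five⟩
    hankelForm_ne_zero_of_mul_eq_one quarticMonomial witnessInverse_mul_restrictionMatrix
      det_hankel_witness_ne_zero
  rw [← map_hankelForm] at hmod ⊢
  exact (map_ne_zero_iff _ (map_injective _ (Int.castRingHom K).injective_int)).mpr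
    fun h₀ => hmod (by rw [h₀, map_zero])

theorem exists_X_sub_linePoint_mem_lineIdeal {L : Submodule ℂ C4} (hL : Module.finrank ℂ L = 2) :
    ∃ (u v : C4) (s r : R3), ∀ a, X a - linePoint s r u v a ∈ lineIdeal L := by
  obtain ⟨proj, hproj⟩ := L.subtype.exists_leftInverse_of_injective L.ker_subtype
  let b : Module.Basis (Fin 2) ℂ L := Module.finBasisOfFinrankEq ℂ L hL
  let coord : Fin 2 → R3 :=
    (LinearMap.toMatrix' (b.equivFun.toLinearMap ∘ₗ proj)).toMvPolynomial
  refine ⟨b 0, b 1, coord 0, coord 1, fun a x hx => ?_⟩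
  have hcoord (i : Fin 2) : eval x (coord i) = b.repr ⟨x, hx⟩ i := by
    have hx' : proj x = ⟨x, hx⟩ := LinearMap.congr_fun hproj ⟨x, hx⟩
    simp [coord, Matrix.toMvPolynomial_eval_eq_apply, hx']
  have hsum : b.repr ⟨x, hx⟩ 0 * (b 0 : C4) a + b.repr ⟨x, hx⟩ 1 * (b 1 : C4) a = x a := by
    have := congrArg (fun y : L => (y : C4) a) (b.sum_repr ⟨x, hx⟩)
    simpa only [Fin.sum_univ_two, Submodule.coe_add, Submodule.coe_smul, Pi.add_apply,
      Pi.smul_apply, smul_eq_mul] using this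
  simp [linePoint, hcoord, hsum]

theorem stmt_11_general (L : Fin 7 → Submodule ℂ C4)
    (hdim : ∀ i, Module.finrank ℂ ↥(L i) = 2) :
    ∃ F : R3, F ≠ 0 ∧ F.IsHomogeneous 12 ∧
      (∀ i, i ≠ 6 → F ∈ (lineIdeal (L i)) ^ 3) ∧ F ∈ (lineIdeal (L 6)) ^ 2 := by
  choose u v s r hL using fun i => exists_X_sub_linePoint_mem_lineIdeal (hdim i)
  obtain ⟨F, hne, hhom, hdvd, hdvd_last⟩ :=
    exists_isHomogeneous_of_hankelForm_ne_zero (hankelForm_witness_ne_zero ℂ) u v s r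
  exact ⟨F, hne, hhom, fun i hi => mem_pow_of_X_pow_dvd_contraction (hL i) (hdvd i hi),
    mem_pow_of_X_pow_dvd_contraction (hL 6) hdvd_last⟩

/-- For every configuration of seven pairwise skew lines in `P^3` there is a
surface of degree 12 vanishing to order 3 along the first six lines and
singular (order 2) along the seventh. -/
theorem stmt_11 (L : Fin 7 → Submodule ℂ C4)
    (hdim : ∀ i, Module.finrank ℂ ↥(L i) = 2)
    (hskew : ∀ i j, i ≠ j → L i ⊓ L j = ⊥) :
    ∃ F : R3, F ≠ 0 ∧ F.IsHomogeneous 12 ∧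
      (∀ i, i ≠ 6 → F ∈ (lineIdeal (L i)) ^ 3) ∧ F ∈ (lineIdeal (L 6)) ^ 2 :=
  stmt_11_general L hdim
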